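/- arXiv:0707.2160 — 5 statements merged into one kernel-verified Lean document; each statement's English description precedes it below -/
import Mathlib

section
/- Let Σ be a finite sequence over a linearly ordered alphabet, and suppose Σ contains no subsequence of the form b,a,b,b,a with a < b. Then Σ contains no subsequence isomorphic to the pattern a,b,a,a,b,b,a and no subsequence isomorphic to the pattern a,b,a,b,a,b,a. -/
/-- A sequence `S` contains a subsequence isomorphic to a pattern `σ` (over alphabet `ℕ`)
if some injective renaming of the symbols of `σ` yields a subsequence (sublist) of `S`. -/
def ContainsPattern {α : Type*} (σ : List ℕ) (S : List α) : Prop :=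
  ∃ f : ℕ → α, Set.InjOn f {x | x ∈ σ} ∧ (σ.map f).Sublist S

/-- If a sequence over a linearly ordered alphabet has no subsequence of the
form `b,a,b,b,a` with `a < b`, then it has no subsequence isomorphic to `a,b,a,a,b,b,a`
and none isomorphic to `a,b,a,b,a,b,a`. -/
theorem no_babba_implies_forbidden {α : Type*} [LinearOrder α] (S : List α)
    (h : ∀ a b : α, a < b → ¬ List.Sublist [b, a, b, b, a] S) :
    ¬ ContainsPattern [0, 1, 0, 0, 1, 1, 0] S ∧
    ¬ ContainsPattern [0, 1, 0, 1, 0, 1, 0] S := by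
  constructor
  · rintro ⟨f, hf, hs⟩
    have hne : f 0 ≠ f 1 := fun e => by
      have := hf (by simp) (by simp) e
      omega
    simp only [List.map_cons, List.map_nil] at hs
    rcases lt_or_gt_of_ne hne with hlt | hlt
    · refine h _ _ hlt (List.Sublist.trans ?_ hs)
      exact .cons _ (.cons_cons _ (.cons _ (List.Sublist.refl _)))
    · refine h _ _ hlt (List.Sublist.trans ?_ hs)
      exact .cons_cons _ (.cons_cons _ (.cons_cons _ (.cons_cons _ (.cons_cons _ (List.nil_sublist _)))))
  · rintro ⟨f, hf, hs⟩
    have hne : f 0 ≠ f 1 := fun e => by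
      have := hf (by simp) (by simp) e
      omega
    simp only [List.map_cons, List.map_nil] at hs
    rcases lt_or_gt_of_ne hne with hlt | hlt
    · refine h _ _ hlt (List.Sublist.trans ?_ hs)
      exact .cons _ (.cons_cons _ (.cons_cons _ (.cons_cons _ (.cons _ (List.Sublist.refl _)))))
    · refine h _ _ hlt (List.Sublist.trans ?_ hs)
      exact .cons_cons _ (.cons_cons _ (.cons_cons _ (.cons _ (.cons_cons _ (.cons_cons _ (List.nil_sublist _))))))
end

section
/- Let L be a binary tree whose root r has no right child, and let L'' be its LCRS ordered tree. Suppose v is the left child of its parent y, both v and y lie on the left spine of L (the path from r obtained by repeatedly taking left children), and y ≠ r. Then the binary tree obtained from L by rotating the edge (v,y) again has a root with no right child, and its LCRS ordered tree is obtained from L'' by making v the new leftmost child of its grandparent in L''. -/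
/-- Labelled binary trees. -/
inductive BTree (α : Type u) where
  | nil : BTree α
  | node (l : BTree α) (v : α) (r : BTree α) : BTree α

/-- Rooted ordered trees (rose trees). -/
inductive Rose (α : Type u) where
  | node (v : α) (children : List (Rose α)) : Rose α

/-- Left-child/right-sibling correspondence: a binary tree is turned into an ordered
forest; the left child of a vertex becomes its leftmost child and the right child of a
vertex becomes its next sibling to the right. -/
def lcrsList {α : Type u} : BTree α → List (Rose α)
  | .nil => []
  | .node l v r => Rose.node v (lcrsList l) :: lcrsList r

/-- Length of the left spine (the path from the root obtained by taking left children). -/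
def spineLen {α : Type u} : BTree α → ℕ
  | .nil => 0
  | .node l _ _ => spineLen l + 1

/-- Rotate the edge between the left-spine vertex at depth `d` and its parent (the
left-spine vertex at depth `d-1`): the standard rotation promoting the child. -/
def spineRotate {α : Type u} : ℕ → BTree α → BTree α
  | 1, .node (.node a x b) y c => .node a x (.node b y c)
  | d+1, .node l v r => .node (spineRotate d l) v r
  | _, t => t

/-- In an ordered tree, take the vertex `g` at depth `k` on the leftmost-child path,
and make the leftmost child of the leftmost child of `g` (i.e. a grandchild `v` of `g`)
the new leftmost child of `g`. -/
def roseMove {α : Type u} : ℕ → Rose α → Rose α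
  | 0, .node g (.node y (vc :: ys) :: gs) => .node g (vc :: .node y ys :: gs)
  | k+1, .node g (c :: cs) => .node g (roseMove k c :: cs)
  | _, t => t

theorem lcrs_spineRotate_aux {α : Type*} (k : ℕ) : ∀ (l : BTree α) (g : α),
    k + 1 < spineLen l →
      Rose.node g (lcrsList (spineRotate (k + 1) l)) =
        roseMove k (Rose.node g (lcrsList l)) := by
  induction k with
  | zero =>
    intro l g h
    match l, h with
    | .node (.node a x b) y c, _ => simp [spineRotate, lcrsList, roseMove]
    | .node .nil y c, h => simp [spineLen] at h
    | .nil, h => simp [spineLen] at h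
  | succ k ih =>
    intro l g h
    match l, h with
    | .node l v r, h =>
      have h' : k + 1 < spineLen l := by
        simp only [spineLen] at h
        omega
      simp [spineRotate, lcrsList, roseMove, ih l v h']
    | .nil, h => simp [spineLen] at h

/-- Let `L` be a binary tree whose root `rv` has no right child and let `v` be
the left-spine vertex at depth `d ≥ 2` (so `v` is the left child of its parent `y`, both on
the left spine, and `y` is not the root).  Rotating the edge `(v,y)` yields a binary tree
whose root again has no right child, and whose LCRS ordered tree is obtained from the LCRS
ordered tree of `L` by making `v` the new leftmost child of its grandparent there. -/
theorem rotation_lcrs {α : Type*} (l : BTree α) (rv : α) (d : ℕ)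
    (h2 : 2 ≤ d) (hd : d < spineLen (BTree.node l rv BTree.nil)) :
    ∃ l' : BTree α,
      spineRotate d (BTree.node l rv BTree.nil) = BTree.node l' rv BTree.nil ∧
      Rose.node rv (lcrsList l') = roseMove (d - 2) (Rose.node rv (lcrsList l)) := by
  obtain ⟨k, rfl⟩ : ∃ k, d = k + 2 := ⟨d - 2, by omega⟩
  refine ⟨spineRotate (k + 1) l, by simp [spineRotate], ?_⟩
  have h' : k + 1 < spineLen l := by
    simp only [spineLen] at hd
    omega
  simpa using lcrs_spineRotate_aux k l rv h'
end

section
/- Let F be a rooted ordered forest and let (u₁,…,u_k), k ≥ 3, be a contiguous subpath of the spine of one of its trees (u_{i+1} is the parent of u_i). Then: (a) the halving compression that, for each odd i ≤ k−2, reassigns the parent of u_i to u_{i+2} and makes u_i the new leftmost child of u_{i+2}, leaves the postorder sequence of the vertices of F unchanged; and (b) the total compression that reassigns the parent of u_i to u_k for all i ≤ k−2 and prepends u₁,…,u_{k−2} (in this order) to the existing child list of u_k, also leaves the postorder sequence unchanged. -/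
structure OForest where
  verts : Finset ℕ
  roots : List ℕ
  par : ℕ → Option ℕ
  childList : ℕ → List ℕ

namespace OForest

/-- Well-formedness of a rooted ordered forest: parents of vertices are vertices, the root
list consists exactly of the parentless vertices, the child lists record exactly the
children of each vertex, and iterating the parent function terminates (witnessed by a rank
function). -/
def Valid (F : OForest) : Prop :=
  (∀ v ∈ F.verts, ∀ u, F.par v = some u → u ∈ F.verts) ∧
  F.roots.Nodup ∧
  (∀ v, v ∈ F.roots ↔ v ∈ F.verts ∧ F.par v = none) ∧
  (∀ v, v ∉ F.verts → F.par v = none) ∧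
  (∀ u, (F.childList u).Nodup) ∧
  (∀ u v, v ∈ F.childList u ↔ v ∈ F.verts ∧ F.par v = some u) ∧
  (∃ dep : ℕ → ℕ, ∀ v ∈ F.verts, ∀ u, F.par v = some u → dep u < dep v)

def postAux (F : OForest) : ℕ → ℕ → List ℕ
  | 0, v => [v]
  | fuel + 1, v => ((F.childList v).map fun c => postAux F fuel c).flatten ++ [v]

/-- Postorder of the forest: for each root from left to right, the postorders of the
subtrees of its children from left to right, followed by the root. -/
def postorder (F : OForest) : List ℕ :=
  (F.roots.map fun r => postAux F F.verts.card r).flatten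

def spineAux (F : OForest) : ℕ → ℕ → List ℕ
  | 0, v => [v]
  | fuel + 1, v =>
    match F.childList v with
    | [] => [v]
    | c :: _ => v :: spineAux F fuel c

/-- The spine of the tree rooted at `r`: the path from `r` to its leftmost leaf, top-down. -/
def spineOf (F : OForest) (r : ℕ) : List ℕ := spineAux F F.verts.card r

/-- Reattach a vertex: `applyMove F (v, oldp, newp)` makes `v` the new leftmost child of
`newp`, removing it from the child list of `oldp`. -/
def applyMove (F : OForest) (m : ℕ × ℕ × ℕ) : OForest where
  verts := F.verts
  roots := F.roots
  par := Function.update F.par m.1 (some m.2.2)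
  childList := fun w =>
    if w = m.2.1 then (F.childList w).erase m.1
    else if w = m.2.2 then m.1 :: F.childList w
    else F.childList w

/-- The moves of a halving compression of the path `u = (u₁,…,u_k)` (0-indexed here):
`p(u_i) := u_{i+2}` for every odd `i ≤ k-2` (1-indexed), each moved vertex becoming the new
leftmost child of its new parent. -/
def halvMoves (u : List ℕ) : List (ℕ × ℕ × ℕ) :=
  (List.range u.length).filterMap fun j =>
    if j % 2 = 0 ∧ j + 2 < u.length then
      some (u.getD j 0, u.getD (j + 1) 0, u.getD (j + 2) 0)
    else none

/-- Postorder-preserving halving compression of a path. -/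
def halvingCompress (F : OForest) (u : List ℕ) : OForest :=
  (halvMoves u).foldl applyMove F

def insertBefore : List ℕ → ℕ → ℕ → List ℕ
  | [], _, x => [x]
  | a :: rest, tgt, x => if a = tgt then x :: a :: rest else a :: insertBefore rest tgt x

/-- An official halving compression of the path `u = (u₁,…,u_k)`, with the optional
(`ext`) additional reassignment `p(u_{k-1}) := p(u_k)` allowed when `k` is even; if
`p(u_k) = none` this makes `u_{k-1}` a new root (inserted just before the old root in the
root order, preserving postorder). -/
def officialCompress (F : OForest) (u : List ℕ) (ext : Bool) : OForest :=
  let base := halvingCompress F u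
  if ext then
    match F.par (u.getD (u.length - 1) 0) with
    | some w => applyMove base (u.getD (u.length - 2) 0, u.getD (u.length - 1) 0, w)
    | none =>
      { verts := base.verts
        roots := insertBefore base.roots (u.getD (u.length - 1) 0) (u.getD (u.length - 2) 0)
        par := Function.update base.par (u.getD (u.length - 2) 0) none
        childList := fun w =>
          if w = u.getD (u.length - 1) 0 then
            (base.childList w).erase (u.getD (u.length - 2) 0)
          else base.childList w }
  else base

/-- The length of a halving compression of `u`: the number of vertices whose parent
pointer is altered. -/
def compLen (u : List ℕ) (ext : Bool) : ℕ :=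
  (u.length - 1) / 2 + (if ext then 1 else 0)

/-- `u = (u₁,…,u_k)` is a path with `u_{i+1}` the parent of `u_i`. -/
def IsUpPath (F : OForest) (u : List ℕ) : Prop :=
  (∀ v ∈ u, v ∈ F.verts) ∧ u.Chain' (fun a b => F.par a = some b)

/-- `u` is a contiguous subpath (bottom-up) of the spine of one of the trees of `F`. -/
def IsSpinalPath (F : OForest) (u : List ℕ) : Prop :=
  ∃ r ∈ F.roots, u <:+: (F.spineOf r).reverse

/-- A compression of `u` is stunted if it does not terminate at a tree root. -/
def stuntedCount (F : OForest) (u : List ℕ) : ℕ :=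
  if F.par (u.getD (u.length - 1) 0) = none then 0 else 1

/-- Delete a vertex (used only for leaves). -/
def deleteVertex (F : OForest) (v : ℕ) : OForest where
  verts := F.verts.erase v
  roots := F.roots.erase v
  par := fun w => if w = v then none else F.par w
  childList := fun w => (F.childList w).erase v

/-- Strict ancestor relation. -/
def Anc (F : OForest) : ℕ → ℕ → Prop :=
  Relation.TransGen fun a b => F.par a = some b

/-- A spontaneous (free) step: an arbitrary postorder-preserving path compression, i.e.
along some path each vertex keeps its parent or is reattached to a strict ancestor on the
path, everything else being unchanged, so that the postorder is preserved. -/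
def SpontStep (F F' : OForest) : Prop :=
  ∃ u : List ℕ, F.IsUpPath u ∧ F'.verts = F.verts ∧ F'.roots = F.roots ∧ F'.Valid ∧
    (∀ v, v ∉ u → F'.par v = F.par v) ∧
    (∀ v ∈ u, F'.par v = F.par v ∨ ∃ w ∈ u, F.Anc v w ∧ F'.par v = some w) ∧
    F'.postorder = F.postorder

end OForest

namespace OForest

/-- The moves of a total compression of `u = (u₁,…,u_k)` (0-indexed): every `u_i`,
`i ≤ k-2`, is reattached to `u_k`; folding in reverse order prepends `u₁,…,u_{k-2}` in
this order to the child list of `u_k`. -/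
def totalMoves (u : List ℕ) : List (ℕ × ℕ × ℕ) :=
  ((List.range (u.length - 2)).reverse).map fun j =>
    (u.getD j 0, u.getD (j + 1) 0, u.getD (u.length - 1) 0)

/-- Postorder-preserving total compression of a path. -/
def totalCompress (F : OForest) (u : List ℕ) : OForest :=
  (totalMoves u).foldl applyMove F

end OForest

namespace OForest

/-- Working invariant with an explicit height function. -/
structure WF (F : OForest) (h : ℕ → ℕ) : Prop where
  par_eq : ∀ w, ∀ c ∈ F.childList w, F.par c = some w
  nodup : ∀ w, (F.childList w).Nodup
  root : ∀ r ∈ F.roots, F.par r = none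
  lt : ∀ w, ∀ c ∈ F.childList w, h c < h w
  le : ∀ r ∈ F.roots, h r ≤ F.verts.card

theorem Valid.exists_wf {F : OForest} (hv : F.Valid) : ∃ h, F.WF h := by
  classical
  obtain ⟨h1, h2, h3, h4, h5, h6, dep, h7⟩ := hv
  have hdep : ∀ a b, F.Anc a b → dep b < dep a := by
    intro a b hab
    have step : ∀ a b, F.par a = some b → dep b < dep a := by
      intro a b hab
      by_cases ha : a ∈ F.verts
      · exact h7 a ha b hab
      · rw [h4 a ha] at hab; cases hab
    induction hab with
    | single h => exact step _ _ h
    | tail _ h ih => exact (step _ _ h).trans ih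
  refine ⟨fun v => (F.verts.filter fun w => F.Anc w v).card, ?_, h5, ?_, ?_, ?_⟩
  · intro w c hc; exact ((h6 w c).1 hc).2
  · intro r hr; exact ((h3 r).1 hr).2
  · intro w c hc
    obtain ⟨hcv, hcp⟩ := (h6 w c).1 hc
    apply Finset.card_lt_card
    rw [Finset.ssubset_iff_of_subset]
    · refine ⟨c, ?_, ?_⟩
      · simp only [Finset.mem_filter]
        exact ⟨hcv, Relation.TransGen.single hcp⟩
      · simp only [Finset.mem_filter, not_and]
        intro _ hcc
        exact lt_irrefl _ (hdep _ _ hcc)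
    · intro x hx
      simp only [Finset.mem_filter] at hx ⊢
      exact ⟨hx.1, Relation.TransGen.tail hx.2 hcp⟩
  · intro r _; exact Finset.card_filter_le _ _

theorem WF.postAux_stable {F : OForest} {h : ℕ → ℕ} (W : F.WF h) :
    ∀ n m v, h v ≤ n → h v ≤ m → F.postAux n v = F.postAux m v := by
  have zero : ∀ v m, h v = 0 → F.postAux m v = [v] := by
    intro v m hv
    cases m with
    | zero => rfl
    | succ m =>
      have : F.childList v = [] := by
        rw [List.eq_nil_iff_forall_not_mem]
        intro c hc
        have := W.lt v c hc
        omega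
      simp [postAux, this]
  intro n
  induction n with
  | zero =>
    intro m v h1 h2
    rw [zero v m (by omega), zero v 0 (by omega)]
  | succ n ih =>
    intro m v h1 h2
    cases m with
    | zero => rw [zero v 0 (by omega), zero v _ (by omega)]
    | succ m =>
      simp only [postAux]
      congr 2
      apply List.map_congr_left
      intro c hc
      have := W.lt v c hc
      exact ih m c (by omega) (by omega)

theorem WF.postAux_eq {F : OForest} {h : ℕ → ℕ} (W : F.WF h) (v : ℕ) :
    F.postAux (h v) v =
      ((F.childList v).map fun c => F.postAux (h c) c).flatten ++ [v] := by
  rw [W.postAux_stable (h v) (h v + 1) v le_rfl (by omega)]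
  simp only [postAux]
  congr 2
  apply List.map_congr_left
  intro c hc
  exact W.postAux_stable _ _ c (W.lt v c hc).le le_rfl

theorem WF.postorder_eq {F : OForest} {h : ℕ → ℕ} (W : F.WF h) :
    F.postorder = (F.roots.map fun r => F.postAux (h r) r).flatten := by
  unfold postorder
  congr 1
  apply List.map_congr_left
  intro r hr
  exact W.postAux_stable _ _ r (W.le r hr) le_rfl

theorem applyMove_childList {F : OForest} {h : ℕ → ℕ} (W : F.WF h) {v p q : ℕ} {A B : List ℕ}
    (hp : F.childList p = v :: A) (hq : F.childList q = p :: B) :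
    (F.applyMove (v, p, q)).childList p = A ∧
    (F.applyMove (v, p, q)).childList q = v :: p :: B ∧
    ∀ w, w ≠ p → w ≠ q → (F.applyMove (v, p, q)).childList w = F.childList w := by
  have hpq : h p < h q := W.lt q p (by simp [hq])
  have hne : q ≠ p := by rintro rfl; omega
  refine ⟨?_, ?_, ?_⟩
  · simp [applyMove, hp]
  · simp [applyMove, hne, hq]
  · intro w h1 h2; simp [applyMove, h1, h2]

theorem WF.move {F : OForest} {h : ℕ → ℕ} (W : F.WF h) {v p q : ℕ} {A B : List ℕ}
    (hp : F.childList p = v :: A) (hq : F.childList q = p :: B) :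
    (F.applyMove (v, p, q)).WF h ∧
    (F.applyMove (v, p, q)).postorder = F.postorder := by
  obtain ⟨gp, gq, gw⟩ := applyMove_childList W hp hq
  have hpq : h p < h q := W.lt q p (by simp [hq])
  have hvp : h v < h p := W.lt p v (by simp [hp])
  have hne : q ≠ p := by rintro rfl; omega
  have hne2 : v ≠ p := by rintro rfl; omega
  have parv : F.par v = some p := W.par_eq p v (by simp [hp])
  have parp : F.par p = some q := W.par_eq q p (by simp [hq])
  have ndp := W.nodup p
  have ndq := W.nodup q
  rw [hp, List.nodup_cons] at ndp
  rw [hq, List.nodup_cons] at ndq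
  have hvB : v ∉ B := by
    intro hb
    have := W.par_eq q v (by simp [hq, hb])
    rw [parv] at this
    exact hne (Option.some.inj this).symm
  have gpar : ∀ c, c ≠ v → (F.applyMove (v, p, q)).par c = F.par c := by
    intro c hc; simp [applyMove, hc]
  have gparv : (F.applyMove (v, p, q)).par v = some q := by simp [applyMove]
  have WG : (F.applyMove (v, p, q)).WF h := by
    constructor
    · intro w c hc
      by_cases h1 : w = p
      · subst h1
        rw [gp] at hc
        rw [gpar c (by rintro rfl; exact ndp.1 hc)]
        exact W.par_eq _ _ (by simp [hp, hc])
      by_cases h2 : w = q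
      · subst h2
        rw [gq] at hc
        by_cases hcv : c = v
        · subst hcv; exact gparv
        rw [gpar c hcv]
        apply W.par_eq
        rw [hq]
        simpa [hcv] using hc
      rw [gw w h1 h2] at hc
      have := W.par_eq w c hc
      rw [gpar c (by rintro rfl; rw [parv] at this; exact h1 (Option.some.inj this).symm)]
      exact this
    · intro w
      by_cases h1 : w = p
      · subst h1; rw [gp]; exact ndp.2
      by_cases h2 : w = q
      · subst h2; rw [gq]
        simp [hne2, hvB, ndq.1, ndq.2]
      rw [gw w h1 h2]; exact W.nodup w
    · intro r hr
      have := W.root r hr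
      rw [gpar r (by rintro rfl; rw [parv] at this; cases this)]
      exact this
    · intro w c hc
      by_cases h1 : w = p
      · subst h1; rw [gp] at hc
        exact W.lt _ _ (by simp [hp, hc])
      by_cases h2 : w = q
      · subst h2; rw [gq] at hc
        by_cases hcv : c = v
        · subst hcv; omega
        apply W.lt
        rw [hq]
        simpa [hcv] using hc
      rw [gw w h1 h2] at hc
      exact W.lt w c hc
    · exact W.le
  refine ⟨WG, ?_⟩
  have key : ∀ n w, h w ≤ n → w ≠ p →
      (F.applyMove (v, p, q)).postAux (h w) w = F.postAux (h w) w := by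
    intro n
    induction n using Nat.strong_induction_on with
    | _ n ih =>
      intro w hw hwp
      have ih' : ∀ c, h c < h w → c ≠ p →
          (F.applyMove (v, p, q)).postAux (h c) c = F.postAux (h c) c :=
        fun c hc hcp => ih (h c) (by omega) c le_rfl hcp
      have mapeq : ∀ L : List ℕ, (∀ c ∈ L, h c < h w ∧ c ≠ p) →
          L.map (fun c => (F.applyMove (v, p, q)).postAux (h c) c) =
          L.map (fun c => F.postAux (h c) c) := by
        intro L hL
        apply List.map_congr_left
        intro c hc
        exact ih' c (hL c hc).1 (hL c hc).2
      by_cases hwq : w = q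
      · subst hwq
        rw [WG.postAux_eq w, W.postAux_eq w, gq, hq]
        simp only [List.map_cons, List.flatten_cons]
        rw [WG.postAux_eq p, W.postAux_eq p, gp, hp, ih' v (by omega) hne2,
          mapeq A, mapeq B]
        · simp
        · intro c hc
          refine ⟨W.lt _ _ (by simp [hq, hc]), ?_⟩
          rintro rfl; exact ndq.1 hc
        · intro c hc
          have := W.lt p c (by simp [hp, hc])
          refine ⟨by omega, ?_⟩
          rintro rfl; omega
      · rw [WG.postAux_eq w, W.postAux_eq w, gw w hwp hwq, mapeq]
        intro c hc
        refine ⟨W.lt _ _ hc, ?_⟩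
        rintro rfl
        have := W.par_eq w c hc
        rw [parp] at this
        exact hwq (Option.some.inj this).symm
  rw [WG.postorder_eq, W.postorder_eq]
  congr 1
  apply List.map_congr_left
  intro r hr
  refine key _ r le_rfl ?_
  rintro rfl
  have := W.root r hr
  rw [parp] at this; cases this

/-- Version of the elementary move in terms of `head?`. -/
theorem WF.move_head {F : OForest} {h : ℕ → ℕ} (W : F.WF h) {v p q : ℕ}
    (hp : (F.childList p).head? = some v) (hq : (F.childList q).head? = some p) :
    (F.applyMove (v, p, q)).WF h ∧
    (F.applyMove (v, p, q)).postorder = F.postorder ∧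
    ((F.applyMove (v, p, q)).childList q).head? = some v ∧
    ∀ w, w ≠ p → w ≠ q → (F.applyMove (v, p, q)).childList w = F.childList w := by
  obtain ⟨A, hA⟩ := List.head?_eq_some_iff.1 hp
  obtain ⟨B, hB⟩ := List.head?_eq_some_iff.1 hq
  obtain ⟨-, gq, gw⟩ := applyMove_childList W hA hB
  obtain ⟨h1, h2⟩ := W.move hA hB
  exact ⟨h1, h2, by rw [gq]; rfl, gw⟩

theorem spineAux_chain (F : OForest) : ∀ n v,
    (F.spineAux n v).IsChain (fun a b => (F.childList a).head? = some b) ∧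
    (F.spineAux n v).head? = some v := by
  intro n
  induction n with
  | zero => intro v; simp [spineAux]
  | succ n ih =>
    intro v
    rw [spineAux]
    split
    · simp
    · rename_i c l hc
      refine ⟨?_, rfl⟩
      rw [List.isChain_cons]
      refine ⟨?_, (ih c).1⟩
      intro y hy
      rw [(ih c).2] at hy
      simp at hy
      simp [hc, hy]

theorem spinal_heads {F : OForest} {u : List ℕ} (hs : F.IsSpinalPath u) :
    ∀ i, i + 1 < u.length →
      (F.childList (u.getD (i + 1) 0)).head? = some (u.getD i 0) := by
  obtain ⟨r, -, hr⟩ := hs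
  have h1 := (spineAux_chain F F.verts.card r).1
  have h2 : (F.spineOf r).reverse.IsChain
      (fun b a => (F.childList a).head? = some b) := by
    rw [List.isChain_reverse]; exact h1
  have h3 := h2.infix hr
  intro i hi
  have := List.isChain_iff_getElem.1 h3 i hi
  rw [List.getD_eq_getElem _ _ hi, List.getD_eq_getElem _ _ (by omega)]
  exact this

theorem halving_fold {h : ℕ → ℕ} {U : ℕ → ℕ} {k : ℕ}
    (inj : ∀ i j, i < j → j < k → U i ≠ U j) {F : OForest} (W : F.WF h)
    (hd : ∀ i, i + 1 < k → (F.childList (U (i + 1))).head? = some (U i)) (n : ℕ) :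
    let G := ((List.range n).filterMap fun j =>
      if j % 2 = 0 ∧ j + 2 < k then some (U j, U (j + 1), U (j + 2)) else none).foldl applyMove F
    G.WF h ∧ G.postorder = F.postorder ∧
      ∀ i, (n + 1) / 2 * 2 ≤ i → i + 1 < k → (G.childList (U (i + 1))).head? = some (U i) := by
  induction n with
  | zero => exact ⟨W, rfl, fun i _ hi => hd i hi⟩
  | succ n ih =>
    intro G
    obtain ⟨W1, e1, d1⟩ := ih
    by_cases hc : n % 2 = 0 ∧ n + 2 < k
    · obtain ⟨a, b, -, d⟩ := W1.move_head (d1 n (by omega) (by omega))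
        (d1 (n + 1) (by omega) (by omega))
      have hG : G = applyMove (((List.range n).filterMap fun j =>
          if j % 2 = 0 ∧ j + 2 < k then some (U j, U (j + 1), U (j + 2)) else none).foldl
            applyMove F) (U n, U (n + 1), U (n + 2)) := by
        simp only [G, List.range_succ, List.filterMap_append, List.foldl_append,
          List.filterMap_cons, List.filterMap_nil, if_pos hc, List.foldl_cons, List.foldl_nil]
      rw [hG]
      refine ⟨a, b.trans e1, ?_⟩
      intro i hi hik
      rw [d]
      · exact d1 i (by omega) hik
      · exact (inj _ _ (by omega) hik).symm
      · exact (inj _ _ (by omega) hik).symm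
    · have hG : G = ((List.range n).filterMap fun j =>
          if j % 2 = 0 ∧ j + 2 < k then some (U j, U (j + 1), U (j + 2)) else none).foldl
            applyMove F := by
        simp only [G, List.range_succ, List.filterMap_append, List.foldl_append,
          List.filterMap_cons, List.filterMap_nil, if_neg hc, List.foldl_nil]
      rw [hG]
      exact ⟨W1, e1, fun i hi hik => d1 i (by omega) hik⟩

theorem total_fold {h : ℕ → ℕ} {U : ℕ → ℕ} {k : ℕ}
    (inj : ∀ i j, i < j → j < k → U i ≠ U j) : ∀ (n : ℕ) (F : OForest), F.WF h → n + 1 < k →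
    (∀ i, i < n → (F.childList (U (i + 1))).head? = some (U i)) →
    (F.childList (U (k - 1))).head? = some (U n) →
    (((List.range n).reverse.map fun j => (U j, U (j + 1), U (k - 1))).foldl
      applyMove F).postorder = F.postorder := by
  intro n
  induction n with
  | zero => intros; rfl
  | succ n ih =>
    intro F W hn hd hlast
    obtain ⟨a, b, c, d⟩ := W.move_head (hd n (by omega)) hlast
    have := ih _ a (by omega) ?_ c
    · rw [List.range_succ, List.reverse_append]
      simp only [List.reverse_cons, List.reverse_nil, List.nil_append, List.cons_append,
        List.map_cons, List.foldl_cons]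
      exact this.trans b
    · intro i hi
      rw [d]
      · exact hd i (by omega)
      · exact inj _ _ (by omega) (by omega)
      · exact inj _ _ (by omega) (by omega)

end OForest

/-- for a contiguous subpath `u = (u₁,…,u_k)`, `k ≥ 3`, of the spine of one
of the trees of a rooted ordered forest `F`: (a) the halving compression (each reattached
`u_i` becoming the new leftmost child of `u_{i+2}`) leaves the postorder of `F` unchanged,
and (b) the total compression (which prepends `u₁,…,u_{k-2}` in this order to the child
list of `u_k`) also leaves the postorder unchanged. -/
theorem spinal_compressions_preserve_postorder (F : OForest) (u : List ℕ)
    (hval : F.Valid) (hpath : F.IsUpPath u) (hk : 3 ≤ u.length)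
    (hspine : F.IsSpinalPath u) :
    (F.halvingCompress u).postorder = F.postorder ∧
    (F.totalCompress u).postorder = F.postorder := by
  obtain ⟨h, W⟩ := hval.exists_wf
  have hd := OForest.spinal_heads hspine
  have step : ∀ i, i + 1 < u.length → h (u.getD i 0) < h (u.getD (i + 1) 0) := fun i hi =>
    W.lt _ _ (List.mem_of_mem_head? (hd i hi))
  have mono : ∀ i j, i < j → j < u.length → h (u.getD i 0) < h (u.getD j 0) := by
    intro i j hij
    induction j, hij using Nat.le_induction with
    | base => intro hj; exact step i hj
    | succ j _ ih => intro hj; exact (ih (by omega)).trans (step j hj)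
  have inj : ∀ i j, i < j → j < u.length → u.getD i 0 ≠ u.getD j 0 := by
    intro i j hij hj e
    have := mono i j hij hj
    rw [e] at this
    exact lt_irrefl _ this
  constructor
  · exact (OForest.halving_fold (U := fun i => u.getD i 0) inj W hd u.length).2.1
  · refine OForest.total_fold (U := fun i => u.getD i 0) inj (u.length - 2) F W (by omega)
      (fun i hi => hd i (by omega)) ?_
    have := hd (u.length - 2) (by omega)
    rw [show u.length - 2 + 1 = u.length - 1 by omega] at this
    exact this
end

section
/- Let F be a rooted forest with N vertices, modified by an arbitrary interleaved sequence of halving path compressions and deletions of leaves. Then: (a) no halving path compression increases the depth of any surviving vertex; (b) every halving compression along a path of at least 4 vertices that terminates at a root strictly increases the number of vertices of depth at most 2; and consequently (c) the total number of halving compressions along paths of at least 4 vertices terminating at a root, over the entire sequence of operations, is at most N. -/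
/-- A rooted forest on a finite vertex set: a finite set of vertices together with a
parent function (`none` at roots). -/
structure PForest where
  verts : Finset ℕ
  par : ℕ → Option ℕ

namespace PForest

/-- Well-formedness: parents of vertices are vertices, non-vertices have no parent, and
iterating the parent function terminates (witnessed by a rank function). -/
def Valid (F : PForest) : Prop :=
  (∀ v ∈ F.verts, ∀ u, F.par v = some u → u ∈ F.verts) ∧
  (∀ v, v ∉ F.verts → F.par v = none) ∧
  (∃ dep : ℕ → ℕ, ∀ v ∈ F.verts, ∀ u, F.par v = some u → dep u < dep v)

/-- `u = (u₁,…,u_k)` is a path with `u_{i+1}` the parent of `u_i`. -/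
def IsUpPath (F : PForest) (u : List ℕ) : Prop :=
  (∀ v ∈ u, v ∈ F.verts) ∧ u.Chain' (fun a b => F.par a = some b)

def setPar (F : PForest) (v : ℕ) (p : Option ℕ) : PForest :=
  ⟨F.verts, Function.update F.par v p⟩

/-- Halving compression of a path `u = (u₁,…,u_k)` (here 0-indexed: `u.getD j` is
`u_{j+1}`): set `p(u_i) := u_{i+2}` for every odd `i ≤ k-2`; if `k` is even it may
additionally (flag `ext`) set `p(u_{k-1}) := p(u_k)`. -/
def halvApply (F : PForest) (u : List ℕ) (ext : Bool) : PForest :=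
  let base :=
    ((List.range u.length).filterMap fun j =>
        if j % 2 = 0 ∧ j + 2 < u.length then some (u.getD j 0, u.getD (j + 2) 0)
        else none).foldl
      (fun G m => G.setPar m.1 (some m.2)) F
  if ext then base.setPar (u.getD (u.length - 2) 0) (F.par (u.getD (u.length - 1) 0))
  else base

/-- Deletion of a vertex. -/
def deleteVertex (F : PForest) (v : ℕ) : PForest :=
  ⟨F.verts.erase v, fun w => if w = v then none else F.par w⟩

def depthAux (F : PForest) : ℕ → ℕ → ℕ
  | 0, _ => 0
  | fuel + 1, v =>
    match F.par v with
    | none => 0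
    | some u => depthAux F fuel u + 1

/-- Depth of a vertex: its number of strict ancestors (roots have depth 0). -/
def depth (F : PForest) (v : ℕ) : ℕ := depthAux F F.verts.card v

/-- A leaf: a vertex with no children. -/
def IsLeaf (F : PForest) (v : ℕ) : Prop := ¬ ∃ w ∈ F.verts, F.par w = some v

end PForest

open PForest

/-- Executions: an arbitrary interleaved sequence of halving path compressions and
deletions of leaves; `Reach F c G` means `G` is reached from `F` performing `c` halving
compressions along paths of at least 4 vertices that terminate at a root. -/
inductive Reach : PForest → ℕ → PForest → Prop
  | refl (F : PForest) : Reach F 0 F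
  | comp (F G : PForest) (u : List ℕ) (ext : Bool) (c : ℕ)
      (hu : F.IsUpPath u) (hlen : 2 ≤ u.length)
      (hext : ext = true → u.length % 2 = 0)
      (h : Reach (F.halvApply u ext) c G) :
      Reach F
        (c + (if 4 ≤ u.length ∧ F.par (u.getD (u.length - 1) 0) = none then 1 else 0)) G
  | del (F G : PForest) (v : ℕ) (c : ℕ)
      (hv : v ∈ F.verts) (hleaf : F.IsLeaf v)
      (h : Reach (F.deleteVertex v) c G) :
      Reach F c G


namespace PForest

theorem depthAux_succ_le (F : PForest) (n v : ℕ) :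
    F.depthAux (n + 1) v ≤ F.depthAux n v + 1 := by
  induction n generalizing v with
  | zero =>
    simp only [depthAux]
    cases F.par v <;> simp
  | succ n ih =>
    rw [depthAux, depthAux]
    cases F.par v with
    | none => simp
    | some w => simpa using ih w

theorem depthAux_mono (F : PForest) {m n : ℕ} (h : m ≤ n) (v : ℕ) :
    F.depthAux m v ≤ F.depthAux n v := by
  induction m generalizing n v with
  | zero => simp [depthAux]
  | succ m ih =>
    obtain ⟨k, rfl⟩ : ∃ k, n = k + 1 := ⟨n - 1, by omega⟩
    rw [depthAux, depthAux]
    cases F.par v with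
    | none => simp
    | some w => simpa using ih (by omega) w

theorem depthAux_le_of_shortcut (F G : PForest)
    (h : ∀ v, G.par v = F.par v ∨ G.par v = (F.par v).bind F.par) (n v : ℕ) :
    G.depthAux n v ≤ F.depthAux n v := by
  induction n generalizing v with
  | zero => simp [depthAux]
  | succ n ih =>
    rw [depthAux, depthAux]
    rcases h v with h1 | h1
    · rw [h1]
      cases F.par v with
      | none => simp
      | some w => simpa using ih w
    · rw [h1]
      cases hv : F.par v with
      | none => simp
      | some w =>
        simp only [Option.bind_some]
        cases hw : F.par w with
        | none => simp
        | some x =>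
          simp only [add_le_add_iff_right]
          refine (ih x).trans ?_
          cases n with
          | zero => simp [depthAux]
          | succ m =>
            refine (F.depthAux_succ_le m x).trans ?_
            rw [depthAux.eq_def F (m + 1) w]
            simp [hw]

theorem foldl_setPar (l : List (ℕ × ℕ)) (F : PForest) :
    (l.foldl (fun G m => G.setPar m.1 (some m.2)) F).verts = F.verts ∧
    ∀ v, ((∀ w, (v, w) ∉ l) ∧
        (l.foldl (fun G m => G.setPar m.1 (some m.2)) F).par v = F.par v) ∨
      ∃ w, (v, w) ∈ l ∧ (l.foldl (fun G m => G.setPar m.1 (some m.2)) F).par v = some w := by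
  induction l generalizing F with
  | nil => simp
  | cons a l ih =>
    obtain ⟨h1, h2⟩ := ih (F.setPar a.1 (some a.2))
    refine ⟨by simpa [setPar] using h1, fun v => ?_⟩
    simp only [List.foldl_cons]
    rcases h2 v with ⟨h3, h4⟩ | ⟨w, h3, h4⟩
    · by_cases hv : v = a.1
      · right
        refine ⟨a.2, by simp [hv], ?_⟩
        rw [h4, hv]
        simp [setPar]
      · left
        refine ⟨fun w hw => ?_, ?_⟩
        · rcases List.mem_cons.1 hw with rfl | hw
          · exact hv rfl
          · exact h3 w hw
        · rw [h4]
          simp [setPar, Function.update_of_ne hv]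
    · exact Or.inr ⟨w, List.mem_cons_of_mem _ h3, h4⟩

theorem IsUpPath.par_getD {F : PForest} {u : List ℕ} (hu : F.IsUpPath u) {j : ℕ}
    (hj : j + 1 < u.length) : F.par (u.getD j 0) = some (u.getD (j + 1) 0) := by
  have h := List.isChain_iff_getElem.1 hu.2 j hj
  rw [List.getD_eq_getElem _ _ (by omega), List.getD_eq_getElem _ _ hj]
  exact h

theorem halvApply_spec {F : PForest} {u : List ℕ} {ext : Bool} (hu : F.IsUpPath u)
    (hlen : 2 ≤ u.length) :
    (F.halvApply u ext).verts = F.verts ∧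
    (∀ v, (F.halvApply u ext).par v = F.par v ∨
      (F.halvApply u ext).par v = (F.par v).bind F.par) ∧
    ∀ j, j % 2 = 0 → j + 2 < u.length →
      (F.halvApply u ext).par (u.getD j 0) = some (u.getD (j + 2) 0) := by
  have two : ∀ j, j + 2 < u.length →
      (F.par (u.getD j 0)).bind F.par = some (u.getD (j + 2) 0) := by
    intro j hj
    rw [hu.par_getD (by omega), Option.bind_some, hu.par_getD (by omega)]
  obtain ⟨l, hl⟩ : ∃ l, l = (List.range u.length).filterMap fun j =>
        if j % 2 = 0 ∧ j + 2 < u.length then some (u.getD j 0, u.getD (j + 2) 0)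
        else none := ⟨_, rfl⟩
  have hmem : ∀ v w, (v, w) ∈ l ↔ ∃ j, j % 2 = 0 ∧ j + 2 < u.length ∧
      u.getD j 0 = v ∧ u.getD (j + 2) 0 = w := by
    intro v w
    rw [hl, List.mem_filterMap]
    constructor
    · rintro ⟨j, -, h⟩
      split_ifs at h with hc
      simp only [Option.some.injEq, Prod.mk.injEq] at h
      exact ⟨j, hc.1, hc.2, h.1, h.2⟩
    · rintro ⟨j, h1, h2, h3, h4⟩
      refine ⟨j, List.mem_range.2 (by omega), ?_⟩
      rw [if_pos ⟨h1, h2⟩, h3, h4]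
  obtain ⟨B, hB⟩ : ∃ B, B = l.foldl (fun G m => G.setPar m.1 (some m.2)) F := ⟨_, rfl⟩
  have hG : F.halvApply u ext = if ext then B.setPar (u.getD (u.length - 2) 0)
      (F.par (u.getD (u.length - 1) 0)) else B := by
    rw [hB, hl]; rfl
  obtain ⟨f1, f2⟩ := foldl_setPar l F
  rw [← hB] at f1 f2
  have key : ∀ v w, (v, w) ∈ l → (F.par v).bind F.par = some w := by
    intro v w h
    obtain ⟨j, h1, h2, rfl, rfl⟩ := (hmem v w).1 h
    exact two j h2
  have b1 : ∀ v, B.par v = F.par v ∨ B.par v = (F.par v).bind F.par := by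
    intro v
    rcases f2 v with h | ⟨w, h, h'⟩
    · exact Or.inl h.2
    · right; rw [h', key v w h]
  have b2 : ∀ j, j % 2 = 0 → j + 2 < u.length →
      B.par (u.getD j 0) = some (u.getD (j + 2) 0) := by
    intro j hj hj2
    rcases f2 (u.getD j 0) with h | ⟨w, h, h'⟩
    · exact absurd ((hmem _ _).2 ⟨j, hj, hj2, rfl, rfl⟩) (h.1 _)
    · rw [h', ← key _ w h, two j hj2]
  rw [hG]
  cases ext with
  | false => exact ⟨f1, b1, b2⟩
  | true =>
    simp only [if_true]
    have hlast : (F.par (u.getD (u.length - 2) 0)).bind F.par =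
        F.par (u.getD (u.length - 1) 0) := by
      rw [hu.par_getD (by omega), Option.bind_some]
      congr 2
      omega
    refine ⟨f1, fun v => ?_, fun j hj hj2 => ?_⟩
    · by_cases hv : v = u.getD (u.length - 2) 0
      · right
        rw [hv, hlast]
        simp [setPar]
      · simp only [setPar, Function.update_of_ne hv]
        exact b1 v
    · by_cases hv : u.getD j 0 = u.getD (u.length - 2) 0
      · rw [← two j hj2, hv, hlast]
        simp [setPar]
      · simp only [setPar, Function.update_of_ne hv]
        exact b2 j hj hj2

theorem halvApply_depth_le {F : PForest} {u : List ℕ} {ext : Bool} (hu : F.IsUpPath u)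
    (hlen : 2 ≤ u.length) (v : ℕ) : (F.halvApply u ext).depth v ≤ F.depth v := by
  obtain ⟨h1, h2, -⟩ := halvApply_spec (ext := ext) hu hlen
  rw [depth, depth, h1]
  exact depthAux_le_of_shortcut _ _ h2 _ _

theorem halvApply_valid {F : PForest} {u : List ℕ} {ext : Bool} (hF : F.Valid)
    (hu : F.IsUpPath u) (hlen : 2 ≤ u.length) : (F.halvApply u ext).Valid := by
  obtain ⟨h1, h2, -⟩ := halvApply_spec (ext := ext) hu hlen
  obtain ⟨v1, v2, dep, v3⟩ := hF
  refine ⟨?_, ?_, dep, ?_⟩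
  · rw [h1]
    intro v hv w hw
    rcases h2 v with h | h
    · exact v1 v hv w (h ▸ hw)
    · rw [h] at hw
      obtain ⟨x, hx, hxw⟩ := Option.bind_eq_some_iff.1 hw
      exact v1 x (v1 v hv x hx) w hxw
  · rw [h1]
    intro v hv
    rcases h2 v with h | h <;> simp [h, v2 v hv]
  · rw [h1]
    intro v hv w hw
    rcases h2 v with h | h
    · exact v3 v hv w (h ▸ hw)
    · rw [h] at hw
      obtain ⟨x, hx, hxw⟩ := Option.bind_eq_some_iff.1 hw
      exact (v3 x (v1 v hv x hx) w hxw).trans (v3 v hv x hx)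

theorem exists_witness {F : PForest} {u : List ℕ} {ext : Bool} (hF : F.Valid)
    (hu : F.IsUpPath u) (hlen : 4 ≤ u.length)
    (hroot : F.par (u.getD (u.length - 1) 0) = none) :
    ∃ v ∈ F.verts, 2 < F.depth v ∧ (F.halvApply u ext).depth v ≤ 2 := by
  obtain ⟨h1, h2, h3⟩ := halvApply_spec (ext := ext) hu (by omega)
  obtain ⟨v1, v2, dep, v3⟩ := hF
  obtain ⟨j, hj, hjk⟩ : ∃ j, j % 2 = 0 ∧ (j + 4 = u.length ∨ j + 5 = u.length) := by
    rcases Nat.mod_two_eq_zero_or_one u.length with h | h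
    · exact ⟨u.length - 4, by omega, by omega⟩
    · exact ⟨u.length - 5, by omega, by omega⟩
  have mem : ∀ i, i < u.length → u.getD i 0 ∈ F.verts := by
    intro i hi
    rw [List.getD_eq_getElem _ _ hi]
    exact hu.1 _ (List.getElem_mem hi)
  have p0 := hu.par_getD (j := j) (by omega)
  have p1 : F.par (u.getD (j + 1) 0) = some (u.getD (j + 2) 0) :=
    hu.par_getD (j := j + 1) (by omega)
  have p2 := hu.par_getD (j := j + 2) (by omega)
  have m0 := mem j (by omega)
  have m1 := mem (j + 1) (by omega)
  have m2 := mem (j + 2) (by omega)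
  have d0 := v3 _ m0 _ p0
  have d1 := v3 _ m1 _ p1
  have hcard : 3 ≤ F.verts.card := by
    have hs : ({u.getD j 0, u.getD (j + 1) 0, u.getD (j + 2) 0} : Finset ℕ) ⊆ F.verts := by
      intro x hx
      simp only [Finset.mem_insert, Finset.mem_singleton] at hx
      rcases hx with rfl | rfl | rfl <;> assumption
    have := Finset.card_le_card hs
    rwa [Finset.card_eq_three.2 ⟨_, _, _, ?_, ?_, ?_, rfl⟩] at this
    · intro h; rw [h] at d0; omega
    · intro h; rw [h] at d0; omega
    · intro h; rw [h] at d1; omega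
  refine ⟨u.getD j 0, m0, ?_, ?_⟩
  · have h := F.depthAux_mono hcard (u.getD j 0)
    simp only [depthAux, p0, p1, p2] at h
    exact h
  · have groot : (F.halvApply u ext).par (u.getD (u.length - 1) 0) = none := by
      rcases h2 (u.getD (u.length - 1) 0) with h | h <;> simp only [h, hroot, Option.bind_none]
    have g0 := h3 j hj (by omega)
    have g1 : (F.halvApply u ext).par (u.getD (j + 2) 0) = none ∨
        (F.halvApply u ext).par (u.getD (j + 2) 0) = some (u.getD (u.length - 1) 0) := by
      rcases hjk with hk | hk
      · have e : u.length - 1 = j + 2 + 1 := by omega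
        rw [e] at hroot ⊢
        rcases h2 (u.getD (j + 2) 0) with h | h
        · right; rw [h, p2]
        · left; rw [h, p2, Option.bind_some, hroot]
      · right
        have e : u.length - 1 = j + 2 + 2 := by omega
        rw [e]
        exact h3 (j + 2) (by omega) (by omega)
    rw [depth]
    have h := (F.halvApply u ext).depthAux_mono
      (show (F.halvApply u ext).verts.card ≤ (F.halvApply u ext).verts.card + 3 by omega)
      (u.getD j 0)
    refine h.trans ?_
    rcases g1 with g1 | g1
    · simp [depthAux, g0, g1, -List.getD_eq_getElem?_getD]
    · simp [depthAux, g0, g1, groot, -List.getD_eq_getElem?_getD]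

theorem deleteVertex_valid {F : PForest} {v : ℕ} (hF : F.Valid) (hleaf : F.IsLeaf v) :
    (F.deleteVertex v).Valid := by
  obtain ⟨v1, v2, dep, v3⟩ := hF
  refine ⟨?_, ?_, dep, ?_⟩
  · intro w hw x hx
    simp only [deleteVertex, Finset.mem_erase] at hw hx ⊢
    rw [if_neg hw.1] at hx
    refine ⟨?_, v1 w hw.2 x hx⟩
    rintro rfl
    exact hleaf ⟨w, hw.2, hx⟩
  · intro w hw
    simp only [deleteVertex, Finset.mem_erase] at hw ⊢
    split_ifs with h
    · rfl
    · exact v2 w (fun h' => hw ⟨h, h'⟩)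
  · intro w hw x hx
    simp only [deleteVertex, Finset.mem_erase] at hw hx
    rw [if_neg hw.1] at hx
    exact v3 w hw.2 x hx

theorem deleteVertex_depthAux_le (F : PForest) (v n w : ℕ) :
    (F.deleteVertex v).depthAux n w ≤ F.depthAux n w := by
  induction n generalizing w with
  | zero => simp [depthAux]
  | succ n ih =>
    rw [depthAux, depthAux]
    by_cases h : w = v
    · simp [deleteVertex, h]
    · have e : (F.deleteVertex v).par w = F.par w := by simp [deleteVertex, h]
      rw [e]
      cases F.par w with
      | none => simp
      | some x => simpa using ih x

theorem deleteVertex_depth_le (F : PForest) (v w : ℕ) :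
    (F.deleteVertex v).depth w ≤ F.depth w :=
  (F.deleteVertex_depthAux_le v _ w).trans
    (F.depthAux_mono (Finset.card_le_card (Finset.erase_subset _ _)) w)

end PForest

theorem reach_bound {F G : PForest} {c : ℕ} (h : Reach F c G) (hF : F.Valid) :
    c ≤ (F.verts.filter fun v => 2 < F.depth v).card := by
  induction h with
  | refl F => simp
  | comp F G u ext c hu hlen hext h ih =>
    have ih := ih (halvApply_valid hF hu hlen)
    have hsub : ((F.halvApply u ext).verts.filter fun v => 2 < (F.halvApply u ext).depth v) ⊆
        F.verts.filter fun v => 2 < F.depth v := by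
      intro w hw
      rw [Finset.mem_filter] at hw ⊢
      rw [(halvApply_spec hu hlen).1] at hw
      exact ⟨hw.1, hw.2.trans_le (halvApply_depth_le hu hlen w)⟩
    split_ifs with hc
    · obtain ⟨x, hx, hx1, hx2⟩ := exists_witness (ext := ext) hF hu hc.1 hc.2
      refine lt_of_le_of_lt ih (Finset.card_lt_card ⟨hsub, fun hs => ?_⟩)
      have := (Finset.mem_filter.1 (hs (Finset.mem_filter.2 ⟨hx, hx1⟩))).2
      omega
    · exact ih.trans (Finset.card_le_card hsub)
  | del F G v c hv hleaf h ih =>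
    refine (ih (deleteVertex_valid hF hleaf)).trans (Finset.card_le_card ?_)
    intro w hw
    rw [Finset.mem_filter] at hw ⊢
    exact ⟨Finset.mem_of_mem_erase hw.1, hw.2.trans_le (F.deleteVertex_depth_le v w)⟩

/-- (a) no halving path compression increases the depth of any surviving
vertex; (b) every halving compression along a path of at least 4 vertices terminating at a
root strictly increases the number of vertices of depth at most 2; (c) consequently, over
any interleaved sequence of halving compressions and leaf deletions starting from a forest
with `N` vertices, the number of halving compressions along paths of at least 4 vertices
terminating at a root is at most `N`. -/
theorem halving_compressions_bound :
    (∀ (F : PForest) (u : List ℕ) (ext : Bool), F.Valid → F.IsUpPath u →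
        2 ≤ u.length → (ext = true → u.length % 2 = 0) →
        ∀ v ∈ F.verts, (F.halvApply u ext).depth v ≤ F.depth v) ∧
    (∀ (F : PForest) (u : List ℕ) (ext : Bool), F.Valid → F.IsUpPath u →
        4 ≤ u.length → (ext = true → u.length % 2 = 0) →
        F.par (u.getD (u.length - 1) 0) = none →
        (F.verts.filter fun v => F.depth v ≤ 2).card <
          ((F.halvApply u ext).verts.filter fun v =>
            (F.halvApply u ext).depth v ≤ 2).card) ∧
    (∀ (F : PForest) (c : ℕ) (G : PForest), F.Valid → Reach F c G →
        c ≤ F.verts.card) := by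
  refine ⟨?_, ?_, ?_⟩
  · intro F u ext _ hu hlen _ v _
    exact halvApply_depth_le hu hlen v
  · intro F u ext hF hu hlen _ hroot
    obtain ⟨x, hx, hx1, hx2⟩ := exists_witness (ext := ext) hF hu hlen hroot
    have hv := (halvApply_spec (ext := ext) hu (by omega)).1
    refine Finset.card_lt_card ⟨?_, fun hs => ?_⟩
    · intro w hw
      have hw := Finset.mem_filter.1 hw
      refine Finset.mem_filter.2 ⟨by rw [hv]; exact hw.1, ?_⟩
      exact (halvApply_depth_le hu (by omega) w).trans hw.2
    · have := (Finset.mem_filter.1 (hs (Finset.mem_filter.2 ⟨by rw [hv]; exact hx, hx2⟩))).2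
      omega
  · intro F c G hF h
    exact (reach_bound h hF).trans (Finset.card_filter_le _ _)
end

section
/- Let n₀ ≥ 1 and let f, g : ℕ → ℕ be nondecreasing functions with g(n) < n for all n > n₀, and suppose f(f(n)) ≤ g(n) for all n > n₀. Then for every n, min{i : f^{(i)}(n) ≤ n₀} ≤ 2 · min{i : g^{(i)}(n) ≤ n₀}, where f^{(i)} denotes i-fold composition (both minima being well defined since g decreases above n₀). -/
theorem iterate_count_aux (n₀ : ℕ) (f g : ℕ → ℕ) (hg : Monotone g)
    (hfg : ∀ n, n₀ < n → f (f n) ≤ g n) (k : ℕ) :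
    ∀ n m, m ≤ n → g^[k] n ≤ n₀ → ∃ j, j ≤ 2 * k ∧ f^[j] m ≤ n₀ := by
  induction k with
  | zero => exact fun n m hm h => ⟨0, le_rfl, le_trans hm h⟩
  | succ k ih =>
    intro n m hm h
    rcases le_or_gt m n₀ with h0 | h0
    · exact ⟨0, Nat.zero_le _, h0⟩
    · obtain ⟨j, hj, hj'⟩ := ih (g n) (f (f m)) ((hfg m h0).trans (hg hm)) h
      exact ⟨j + 2, by omega, hj'⟩

theorem iterate_exists_aux (n₀ : ℕ) (g : ℕ → ℕ)
    (hgdec : ∀ n, n₀ < n → g n < n) (n : ℕ) : ∃ i, g^[i] n ≤ n₀ := by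
  induction n using Nat.strong_induction_on with
  | _ n ih =>
    rcases le_or_gt n n₀ with h0 | h0
    · exact ⟨0, h0⟩
    · obtain ⟨i, hi⟩ := ih (g n) (hgdec n h0)
      exact ⟨i + 1, hi⟩

/-- If `f` and `g` are nondecreasing, `g n < n` above `n₀ ≥ 1`, and
`f (f n) ≤ g n` above `n₀`, then the number of iterations of `f` needed to drop to `n₀`
is at most twice the number of iterations of `g` needed to drop to `n₀`. -/
theorem iterate_count_le_twice (n₀ : ℕ) (hn₀ : 1 ≤ n₀) (f g : ℕ → ℕ)
    (hf : Monotone f) (hg : Monotone g)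
    (hgdec : ∀ n, n₀ < n → g n < n)
    (hfg : ∀ n, n₀ < n → f (f n) ≤ g n) (n : ℕ) :
    sInf {i | f^[i] n ≤ n₀} ≤ 2 * sInf {i | g^[i] n ≤ n₀} := by
  have hmem : sInf {i | g^[i] n ≤ n₀} ∈ {i | g^[i] n ≤ n₀} :=
    Nat.sInf_mem (iterate_exists_aux n₀ g hgdec n)
  obtain ⟨j, hj, hj'⟩ := iterate_count_aux n₀ f g hg hfg _ n n le_rfl hmem
  have hle : sInf {i | f^[i] n ≤ n₀} ≤ j := Nat.sInf_le hj'
  exact hle.trans hj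
end
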